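/- Let A be a finite characteristically simple skew left brace (A has at least two elements and its only characteristic ideals are 0 and A). Then there exists a simple skew left brace S and a positive integer n such that A is isomorphic, as a skew left brace, to the direct product S^n. -/

import Mathlib

/-- A skew left brace: `(A,+)` and `(A,∘)` are groups (sharing the same identity `0`)
such that `a ∘ (b + c) = a ∘ b - a + a ∘ c`.  Here `circ` is the operation `∘` and
`cinv a` is the inverse of `a` in `(A,∘)`. -/
class SkewBrace (A : Type*) extends AddGroup A where
  circ : A → A → A
  cinv : A → A
  circ_assoc : ∀ a b c : A, circ (circ a b) c = circ a (circ b c)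
  zero_circ : ∀ a : A, circ 0 a = a
  circ_zero : ∀ a : A, circ a 0 = a
  cinv_circ : ∀ a : A, circ (cinv a) a = 0
  circ_cinv : ∀ a : A, circ a (cinv a) = 0
  compat : ∀ a b c : A, circ a (b + c) = circ a b + -a + circ a c

open SkewBrace

/-- `lam a b = -a + a ∘ b`. -/
def lam {A : Type*} [SkewBrace A] (a b : A) : A := -a + circ a b

/-- The star operation `a * b = lam a b - b = -a + a ∘ b - b`. -/
def bstar {A : Type*} [SkewBrace A] (a b : A) : A := lam a b - b

/-- `X * Y`: the subgroup of `(A,+)` generated by `{x * y : x ∈ X, y ∈ Y}`. -/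
def starSpan {A : Type*} [SkewBrace A] (X Y : Set A) : AddSubgroup A :=
  AddSubgroup.closure {z | ∃ x ∈ X, ∃ y ∈ Y, z = bstar x y}

/-- The right series of `st`: `rseriesOf st 0 = A = A^(1)` and
`rseriesOf st n = A^(n+1)`, so that `A^(n+1) = A^(n) * A`. -/
def rseriesOf {G : Type*} [AddGroup G] (st : G → G → G) : ℕ → AddSubgroup G
  | 0 => ⊤
  | n + 1 => AddSubgroup.closure {z | ∃ u ∈ rseriesOf st n, ∃ a : G, z = st u a}

/-- An ideal of a skew brace: a left ideal that is normal in `(A,+)` and in `(A,∘)`. -/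
def IsIdeal {A : Type*} [SkewBrace A] (I : AddSubgroup A) : Prop :=
  (∀ a : A, ∀ x ∈ I, lam a x ∈ I) ∧ I.Normal ∧
  (∀ a : A, ∀ x ∈ I, circ (circ a x) (cinv a) ∈ I)

/-- A skew brace automorphism: a bijection preserving `+` and `∘`. -/
def IsBrAut {A : Type*} [SkewBrace A] (σ : A → A) : Prop :=
  Function.Bijective σ ∧ (∀ x y : A, σ (x + y) = σ x + σ y) ∧
  (∀ x y : A, σ (circ x y) = circ (σ x) (σ y))

/-- A characteristic ideal: an ideal invariant under all skew brace automorphisms. -/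
def IsCharIdeal {A : Type*} [SkewBrace A] (I : AddSubgroup A) : Prop :=
  IsIdeal I ∧ ∀ σ : A → A, IsBrAut σ → σ '' (I : Set A) = (I : Set A)

/-- A characteristically simple skew brace: nontrivial, and its only characteristic
ideals are `0` and `A`. -/
def IsCharSimple (A : Type*) [SkewBrace A] : Prop :=
  Nontrivial A ∧ ∀ I : AddSubgroup A, IsCharIdeal I → I = ⊥ ∨ I = ⊤

/-- A simple skew brace: nontrivial, and its only ideals are `0` and `A`. -/
def IsSimpleSB (A : Type*) [SkewBrace A] : Prop :=
  Nontrivial A ∧ ∀ I : AddSubgroup A, IsIdeal I → I = ⊥ ∨ I = ⊤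

/-- The addition of a skew brace, as a function (for explicit instance arguments). -/
def braceAdd (A : Type*) [SkewBrace A] : A → A → A := fun x y => x + y

theorem circ_eq {A : Type*} [SkewBrace A] (a b : A) : circ a b = a + lam a b := by
  simp [lam]

theorem lam_add {A : Type*} [SkewBrace A] (a b c : A) : lam a (b + c) = lam a b + lam a c := by
  simp [lam, compat, add_assoc]

theorem cinv_unique {A : Type*} [SkewBrace A] {a b : A} (h : circ a b = 0) : b = cinv a := by
  rw [← zero_circ b, ← cinv_circ a, circ_assoc, h, circ_zero]

theorem cinv_cinv' {A : Type*} [SkewBrace A] (a : A) : cinv (cinv a) = a :=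
  (cinv_unique (cinv_circ a)).symm

theorem cinv_circ_cancel {A : Type*} [SkewBrace A] (a b : A) : circ (cinv a) (circ a b) = b := by
  rw [← circ_assoc, cinv_circ, zero_circ]

theorem circ_cinv_cancel {A : Type*} [SkewBrace A] (a b : A) : circ a (circ (cinv a) b) = b := by
  rw [← circ_assoc, circ_cinv, zero_circ]

theorem lam_circ {A : Type*} [SkewBrace A] (a b c : A) :
    lam (circ a b) c = lam a (lam b c) := by
  have h : circ a (circ b c) = circ (circ a b) c := (circ_assoc a b c).symm
  rw [circ_eq b c, circ_eq a (b + _), lam_add, ← add_assoc, ← circ_eq, circ_eq (circ a b) c] at h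
  exact (add_left_cancel h).symm

theorem lam_lam_cinv {A : Type*} [SkewBrace A] (a c : A) : lam a (lam (cinv a) c) = c := by
  rw [← lam_circ, circ_cinv]; simp [lam, zero_circ]

theorem ideal_iff {A : Type*} [SkewBrace A] {I : AddSubgroup A} (hI : IsIdeal I) (a b : A) :
    -a + b ∈ I ↔ circ (cinv a) b ∈ I := by
  have key : -a + b = lam a (circ (cinv a) b) := by rw [lam, circ_cinv_cancel]
  rw [key]
  constructor
  · intro h
    have := hI.1 (cinv a) _ h
    rwa [← lam_circ, cinv_circ, lam, zero_circ, neg_zero, zero_add] at this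
  · exact hI.1 a _

theorem ideal_circ {A : Type*} [SkewBrace A] {I : AddSubgroup A} (hI : IsIdeal I) {x y : A}
    (hx : x ∈ I) (hy : y ∈ I) : circ x y ∈ I := by
  rw [circ_eq]; exact I.add_mem hx (hI.1 _ _ hy)

theorem ideal_congr {A : Type*} [SkewBrace A] {I : AddSubgroup A} (hI : IsIdeal I) {a a' b b' : A}
    (ha : -a + a' ∈ I) (hb : -b + b' ∈ I) : -(circ a b) + circ a' b' ∈ I := by
  rw [ideal_iff hI] at *
  have h1 := ideal_circ hI (hI.2.2 (cinv b) _ ha) hb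
  rw [cinv_cinv'] at h1
  have h2 : cinv (circ a b) = circ (cinv b) (cinv a) := by
    symm; apply cinv_unique
    rw [circ_assoc, circ_cinv_cancel, circ_cinv]
  rw [h2]
  simpa only [circ_assoc, circ_cinv_cancel] using h1

theorem ideal_congr_cinv {A : Type*} [SkewBrace A] {I : AddSubgroup A} (hI : IsIdeal I) {a a' : A}
    (ha : -a + a' ∈ I) : -(cinv a) + cinv a' ∈ I := by
  have h' : -a' + a ∈ I := by simpa using I.neg_mem ha
  rw [ideal_iff hI] at *
  have h1 := hI.2.2 a' _ h'
  rw [cinv_cinv']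
  rwa [circ_cinv_cancel] at h1

/-- The quotient of a skew brace by an ideal. -/
@[reducible] noncomputable def quotBrace {A : Type*} [SkewBrace A] (I : AddSubgroup A) (hI : IsIdeal I) :
    SkewBrace (A ⧸ I) :=
  haveI := hI.2.1
  { (inferInstance : AddGroup (A ⧸ I)) with
    circ := Quotient.map₂ circ (fun a a' ha b b' hb => by
      rw [← Quotient.eq_iff_equiv] at *
      exact QuotientAddGroup.eq.2 (ideal_congr hI (QuotientAddGroup.eq.1 ha)
        (QuotientAddGroup.eq.1 hb)))
    cinv := Quotient.map cinv (fun a a' ha => by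
      rw [← Quotient.eq_iff_equiv] at *
      exact QuotientAddGroup.eq.2 (ideal_congr_cinv hI (QuotientAddGroup.eq.1 ha)))
    circ_assoc := by
      rintro ⟨a⟩ ⟨b⟩ ⟨c⟩
      exact congrArg (QuotientAddGroup.mk (s := I)) (circ_assoc a b c)
    zero_circ := by
      rintro ⟨a⟩
      exact congrArg (QuotientAddGroup.mk (s := I)) (zero_circ a)
    circ_zero := by
      rintro ⟨a⟩
      exact congrArg (QuotientAddGroup.mk (s := I)) (circ_zero a)
    cinv_circ := by
      rintro ⟨a⟩
      exact congrArg (QuotientAddGroup.mk (s := I)) (cinv_circ a)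
    circ_cinv := by
      rintro ⟨a⟩
      exact congrArg (QuotientAddGroup.mk (s := I)) (circ_cinv a)
    compat := by
      rintro ⟨a⟩ ⟨b⟩ ⟨c⟩
      exact congrArg (QuotientAddGroup.mk (s := I)) (compat a b c) }

theorem hom_cinv {A B : Type*} [SkewBrace A] [SkewBrace B] (f : A →+ B)
    (hc : ∀ x y, f (circ x y) = circ (f x) (f y)) (a : A) : f (cinv a) = cinv (f a) := by
  apply cinv_unique; rw [← hc, circ_cinv, map_zero]

theorem hom_lam {A B : Type*} [SkewBrace A] [SkewBrace B] (f : A →+ B)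
    (hc : ∀ x y, f (circ x y) = circ (f x) (f y)) (a b : A) : f (lam a b) = lam (f a) (f b) := by
  simp [lam, hc]

theorem ideal_comap {A B : Type*} [SkewBrace A] [SkewBrace B] (f : A →+ B)
    (hc : ∀ x y, f (circ x y) = circ (f x) (f y)) {I : AddSubgroup B} (hI : IsIdeal I) :
    IsIdeal (I.comap f) := by
  refine ⟨fun a x hx => ?_, hI.2.1.comap f, fun a x hx => ?_⟩
  · rw [AddSubgroup.mem_comap, hom_lam f hc]; exact hI.1 _ _ hx
  · rw [AddSubgroup.mem_comap, hc, hc, hom_cinv f hc]; exact hI.2.2 _ _ hx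

theorem ideal_map {A B : Type*} [SkewBrace A] [SkewBrace B] (f : A →+ B)
    (hf : Function.Surjective f)
    (hc : ∀ x y, f (circ x y) = circ (f x) (f y)) {I : AddSubgroup A} (hI : IsIdeal I) :
    IsIdeal (I.map f) := by
  refine ⟨fun a x hx => ?_, hI.2.1.map f hf, fun a x hx => ?_⟩
  · obtain ⟨a, rfl⟩ := hf a
    obtain ⟨x, hx, rfl⟩ := hx
    exact ⟨_, hI.1 a x hx, hom_lam f hc _ _⟩
  · obtain ⟨a, rfl⟩ := hf a
    obtain ⟨x, hx, rfl⟩ := hx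
    exact ⟨_, hI.2.2 a x hx, by rw [hc, hc, hom_cinv f hc]⟩

theorem ideal_iInf {A : Type*} [SkewBrace A] {ι : Sort*} (I : ι → AddSubgroup A)
    (hI : ∀ i, IsIdeal (I i)) : IsIdeal (⨅ i, I i) := by
  refine ⟨fun a x hx => ?_, AddSubgroup.normal_iInf_normal fun i => (hI i).2.1, fun a x hx => ?_⟩
  · rw [AddSubgroup.mem_iInf] at *; exact fun i => (hI i).1 _ _ (hx i)
  · rw [AddSubgroup.mem_iInf] at *; exact fun i => (hI i).2.2 _ _ (hx i)

theorem ideal_bot {A : Type*} [SkewBrace A] : IsIdeal (⊥ : AddSubgroup A) := by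
  refine ⟨fun a x hx => ?_, inferInstance, fun a x hx => ?_⟩
  · rw [AddSubgroup.mem_bot] at *; simp [hx, lam, circ_zero]
  · rw [AddSubgroup.mem_bot] at *; simp [hx, circ_zero, circ_cinv]

/-- A finite family of surjections onto a simple brace, jointly injective and minimal
with this property, is jointly surjective. -/
theorem jointly_surj {A S : Type*} [SkewBrace A] [SkewBrace S] (hS : IsSimpleSB S)
    {ι : Type*} [Fintype ι] [DecidableEq ι] (f : ι → A →+ S) (hf : ∀ i, Function.Surjective (f i))
    (hc : ∀ i x y, f i (circ x y) = circ (f i x) (f i y))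
    (hinj : ∀ x, (∀ i, f i x = 0) → x = 0)
    (hmin : ∀ i, ∃ x, x ≠ 0 ∧ ∀ j, j ≠ i → f j x = 0) (s : ι → S) : ∃ x, ∀ i, f i x = s i := by
  have h1 : ∀ i (t : S), ∃ x, f i x = t ∧ ∀ j, j ≠ i → f j x = 0 := by
    intro i t
    let K : AddSubgroup A := ⨅ j : {j // j ≠ i}, (⊥ : AddSubgroup S).comap (f j)
    have hK : IsIdeal K := ideal_iInf _ fun j => ideal_comap _ (hc j) ideal_bot
    have memK : ∀ x, x ∈ K ↔ ∀ j, j ≠ i → f j x = 0 := by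
      intro x; simp [K, AddSubgroup.mem_iInf, AddSubgroup.mem_comap]
    rcases hS.2 _ (ideal_map (f i) (hf i) (hc i) hK) with hb | ht
    · obtain ⟨x, hx0, hx⟩ := hmin i
      refine absurd (hinj x fun j => ?_) hx0
      by_cases hj : j = i
      · subst hj
        have : f j x ∈ K.map (f j) := ⟨x, (memK x).2 hx, rfl⟩
        rwa [hb, AddSubgroup.mem_bot] at this
      · exact hx j hj
    · have : t ∈ K.map (f i) := by rw [ht]; trivial
      obtain ⟨x, hx, rfl⟩ := this
      exact ⟨x, rfl, (memK x).1 hx⟩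
  have h2 : ∀ T : Finset ι, ∃ x, (∀ i ∈ T, f i x = s i) ∧ ∀ i, i ∉ T → f i x = 0 := by
    intro T
    induction T using Finset.induction_on with
    | empty => exact ⟨0, by simp⟩
    | insert a T ha ih =>
      obtain ⟨x, hx1, hx2⟩ := ih
      obtain ⟨y, hy1, hy2⟩ := h1 a (s a)
      refine ⟨x + y, fun i hi => ?_, fun i hi => ?_⟩
      · rw [map_add]
        by_cases hia : i = a
        · subst hia; rw [hx2 i ha, hy1, zero_add]
        · rw [hy2 i hia, add_zero]; exact hx1 i (Finset.mem_of_mem_insert_of_ne hi hia)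
      · rw [Finset.mem_insert, not_or] at hi
        rw [map_add, hx2 i hi.2, hy2 i hi.1, add_zero]
  obtain ⟨x, hx, -⟩ := h2 Finset.univ
  exact ⟨x, fun i => hx i (Finset.mem_univ i)⟩

/-- An automorphism, as an additive homomorphism. -/
def autHom {A : Type*} [SkewBrace A] (σ : {σ : A → A // IsBrAut σ}) : A →+ A :=
  AddMonoidHom.mk' σ.1 σ.2.2.1

/-- a finite characteristically simple skew brace is isomorphic, as a skew
brace, to a direct power `S^n` (componentwise operations) of a simple skew brace `S`. -/
theorem stmt18 {A : Type u} [SkewBrace A] [Finite A] (h : IsCharSimple A) :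
    ∃ (S : Type u) (instS : SkewBrace S) (n : ℕ), 0 < n ∧
      @IsSimpleSB S instS ∧
      ∃ e : A ≃ (Fin n → S),
        (∀ (x y : A) (i : Fin n), e (x + y) i = @braceAdd S instS (e x i) (e y i)) ∧
        (∀ (x y : A) (i : Fin n), e (circ x y) i = @SkewBrace.circ S instS (e x i) (e y i)) := by
  classical
  obtain ⟨hnt, hchar⟩ := h
  -- a maximal proper ideal
  obtain ⟨M, ⟨hM, hMtop⟩, hmax⟩ : ∃ M : AddSubgroup A, (IsIdeal M ∧ M ≠ ⊤) ∧
      ∀ N : AddSubgroup A, (IsIdeal N ∧ N ≠ ⊤) → M ≤ N → N = M := by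
    obtain ⟨M, hM⟩ := (Set.toFinite {I : AddSubgroup A | IsIdeal I ∧ I ≠ ⊤}).exists_maximal
      ⟨⊥, ideal_bot, bot_ne_top⟩
    exact ⟨M, hM.1, fun N hN hle => le_antisymm (hM.2 hN hle) hle⟩
  haveI := hM.2.1
  letI instS : SkewBrace (A ⧸ M) := quotBrace M hM
  let π : A →+ A ⧸ M := QuotientAddGroup.mk' M
  have hπ : Function.Surjective π := QuotientAddGroup.mk'_surjective M
  have hπc : ∀ x y, π (circ x y) = circ (π x) (π y) := fun x y => rfl
  have hπ0 : ∀ x, π x = 0 ↔ x ∈ M := fun x => QuotientAddGroup.eq_zero_iff x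
  have hS : IsSimpleSB (A ⧸ M) := by
    refine ⟨?_, fun I hI => ?_⟩
    · obtain ⟨x, hx⟩ : ∃ x, x ∉ M := by
        by_contra! hcon
        exact hMtop ((AddSubgroup.eq_top_iff' M).2 hcon)
      exact ⟨π x, 0, fun h0 => hx ((hπ0 x).1 h0)⟩
    · by_cases ht : I.comap π = ⊤
      · right
        rw [AddSubgroup.eq_top_iff']
        intro s
        obtain ⟨x, rfl⟩ := hπ s
        have : x ∈ I.comap π := by rw [ht]; trivial
        exact this
      · left
        have hle : M ≤ I.comap π := fun x hx => by
          rw [AddSubgroup.mem_comap, (hπ0 x).2 hx]; exact I.zero_mem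
        have := hmax _ ⟨ideal_comap π hπc hI, ht⟩ hle
        rw [AddSubgroup.eq_bot_iff_forall]
        intro s hs
        obtain ⟨x, rfl⟩ := hπ s
        have hx : x ∈ I.comap π := hs
        rw [this] at hx
        exact (hπ0 x).2 hx
  -- the automorphism family
  let J := {σ : A → A // IsBrAut σ}
  haveI : Fintype J := Fintype.ofFinite J
  let P : Finset J → Prop := fun T => ∀ x, (∀ σ ∈ T, σ.1 x ∈ M) → x = 0
  have hPuniv : P Finset.univ := by
    let I : AddSubgroup A := ⨅ σ : J, M.comap (autHom σ)
    have memI : ∀ x, x ∈ I ↔ ∀ σ : J, σ.1 x ∈ M := by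
      intro x; simp only [I, AddSubgroup.mem_iInf, AddSubgroup.mem_comap]; rfl
    have hI : IsIdeal I := ideal_iInf _ fun σ => ideal_comap _ σ.2.2.2 hM
    have hIc : IsCharIdeal I := by
      refine ⟨hI, fun σ hσ => ?_⟩
      apply Set.eq_of_subset_of_ncard_le
      · rintro _ ⟨x, hx, rfl⟩
        refine (memI _).2 fun τ => ?_
        exact (memI x).1 hx ⟨τ.1 ∘ σ, τ.2.1.comp hσ.1,
          fun x y => by simp [hσ.2.1, τ.2.2.1], fun x y => by simp [hσ.2.2, τ.2.2.2]⟩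
      · rw [Set.ncard_image_of_injective _ hσ.1.1]
      · exact Set.toFinite _
    rcases hchar I hIc with hb | ht
    · intro x hx
      have : x ∈ I := (memI x).2 fun σ => hx σ (Finset.mem_univ σ)
      rwa [hb, AddSubgroup.mem_bot] at this
    · exfalso
      apply hMtop
      rw [AddSubgroup.eq_top_iff']
      intro x
      have : x ∈ I := by rw [ht]; trivial
      exact (memI x).1 this ⟨id, Function.bijective_id, fun _ _ => rfl, fun _ _ => rfl⟩
  obtain ⟨T, hT, hTmin⟩ : ∃ T, P T ∧ ∀ T', P T' → T' ≤ T → T ≤ T' := by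
    obtain ⟨T, hT⟩ := (Set.toFinite {T | P T}).exists_minimal ⟨_, hPuniv⟩
    exact ⟨T, hT.1, fun T' h1 h2 => hT.2 h1 h2⟩
  let eq := T.equivFin
  let f : Fin T.card → A →+ A ⧸ M := fun i => π.comp (autHom (eq.symm i).1)
  have hf0 : ∀ i x, f i x = 0 ↔ (eq.symm i).1.1 x ∈ M := fun i x => hπ0 _
  have hfs : ∀ i, Function.Surjective (f i) := fun i => hπ.comp (eq.symm i).1.2.1.2
  have hfc : ∀ i x y, f i (circ x y) = circ (f i x) (f i y) := fun i x y => by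
    change π ((eq.symm i).1.1 (circ x y)) = _
    rw [(eq.symm i).1.2.2.2, hπc]; rfl
  have hinj : ∀ x, (∀ i, f i x = 0) → x = 0 := by
    intro x hx
    refine hT x fun σ hσ => ?_
    have := (hf0 _ _).1 (hx (eq ⟨σ, hσ⟩))
    simpa using this
  have hmin : ∀ i, ∃ x, x ≠ 0 ∧ ∀ j, j ≠ i → f j x = 0 := by
    intro i
    have hn : ¬ P (T.erase (eq.symm i).1) := fun hP =>
      Finset.notMem_erase _ _ (hTmin _ hP (Finset.erase_subset _ _) (eq.symm i).2)
    simp only [P, not_forall] at hn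
    obtain ⟨x, hx, hx0⟩ := hn
    refine ⟨x, hx0, fun j hj => (hf0 j x).2 (hx _ (Finset.mem_erase.2 ⟨?_, (eq.symm j).2⟩))⟩
    intro h
    exact hj (eq.symm.injective (Subtype.ext h))
  have hsurj := jointly_surj hS f hfs hfc hinj hmin
  refine ⟨A ⧸ M, instS, T.card, ?_, hS, Equiv.ofBijective (fun x i => f i x) ⟨?_, ?_⟩, ?_, ?_⟩
  · rw [Finset.card_pos, Finset.nonempty_iff_ne_empty]
    rintro rfl
    obtain ⟨x, hx⟩ := exists_ne (0 : A)
    exact hx (hT x (by simp))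
  · intro x y hxy
    have : x - y = 0 := hinj _ fun i => by
      rw [map_sub, sub_eq_zero]; exact congrFun hxy i
    exact sub_eq_zero.1 this
  · intro s
    obtain ⟨x, hx⟩ := hsurj s
    exact ⟨x, funext hx⟩
  · intro x y i
    exact map_add (f i) x y
  · intro x y i
    exact hfc i x y
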